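/- Let A ∈ ℂ^{n×n}. Then the first ideal GMRES approximation equals the first worst-case GMRES residual norm: inf_{α ∈ ℂ} sup_{‖v‖ = 1} ‖v − α A v‖ = sup_{‖v‖ = 1} inf_{α ∈ ℂ} ‖v − α A v‖; equivalently, inf_{α ∈ ℂ} ‖I − α A‖ = sup_{‖v‖ = 1} inf_{α ∈ ℂ} ‖v − α A v‖. -/

import Mathlib

noncomputable section

/-- Spectral (operator) norm of a matrix. -/
def opNorm {n : ℕ} (A : Matrix (Fin n) (Fin n) ℂ) : ℝ :=
  ‖Matrix.toEuclideanCLM (𝕜 := ℂ) A‖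

open scoped InnerProductSpace
open Filter Topology

section BirkhoffOrthogonality

variable {E : Type*} [NormedAddCommGroup E] [InnerProductSpace ℂ E]

/-- **Toeplitz–Hausdorff theorem**: the numerical range of an operator compressed to a subspace
is convex. -/
theorem convex_numericalRange (V : Submodule ℂ E) (M : E →ₗ[ℂ] E) :
    Convex ℝ {z : ℂ | ∃ v ∈ V, ‖v‖ = 1 ∧ ⟪v, M v⟫_ℂ = z} := by
  rintro _ ⟨u, huV, hu, rfl⟩ _ ⟨w, hwV, hw, rfl⟩ a b ha hb hab
  set x := ⟪u, M u⟫_ℂ with hx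
  set y := ⟪w, M w⟫_ℂ with hy
  by_cases hxy : x = y
  · refine ⟨u, huV, hu, ?_⟩
    rw [← hxy, ← add_smul, hab, one_smul]
  have hd : y - x ≠ 0 := sub_ne_zero.2 (Ne.symm hxy)
  have hu_self : ⟪u, u⟫_ℂ = 1 := by rw [inner_self_eq_norm_sq_to_K, hu]; norm_num
  have hw_self : ⟪w, w⟫_ℂ = 1 := by rw [inner_self_eq_norm_sq_to_K, hw]; norm_num
  -- Normalise the form so that it takes the values `0` at `u` and `1` at `w`.
  let N : E →ₗ[ℂ] E := (y - x)⁻¹ • (M - x • LinearMap.id)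
  have hN : ∀ v v' : E, ⟪v, N v'⟫_ℂ = (y - x)⁻¹ * (⟪v, M v'⟫_ℂ - x * ⟪v, v'⟫_ℂ) := by
    intro v v'
    simp [N]
  have hNu : ⟪u, N u⟫_ℂ = 0 := by rw [hN, hu_self, ← hx]; ring
  have hNw : ⟪w, N w⟫_ℂ = 1 := by rw [hN, hw_self, ← hy]; field_simp
  -- A phase that makes the cross term real.
  obtain ⟨θ, hθ, hθz⟩ : ∃ θ : ℂ, ‖θ‖ = 1 ∧
      ((‖⟪w, N u⟫_ℂ - (starRingEnd ℂ) ⟪u, N w⟫_ℂ‖ : ℝ) : ℂ) =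
        θ * (⟪w, N u⟫_ℂ - (starRingEnd ℂ) ⟪u, N w⟫_ℂ) :=
    RCLike.exists_norm_eq_mul_self (K := ℂ) _
  let p : ℝ → E := fun t => ((1 - t : ℝ) : ℂ) • θ • u + (t : ℂ) • w
  have hq : ∀ t, ⟪p t, N (p t)⟫_ℂ = (t : ℂ) ^ 2 +
      (t : ℂ) * ((1 - t : ℝ) : ℂ) * ((starRingEnd ℂ) θ * ⟪u, N w⟫_ℂ + θ * ⟪w, N u⟫_ℂ) := by
    intro t
    simp only [p, map_add, map_smul, inner_add_left, inner_add_right, inner_smul_left,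
      inner_smul_right, hNu, hNw, Complex.conj_ofReal]
    ring
  have him : ∀ t, (⟪p t, N (p t)⟫_ℂ).im = 0 := by
    intro t
    have hcross : ((starRingEnd ℂ) θ * ⟪u, N w⟫_ℂ + θ * ⟪w, N u⟫_ℂ).im = 0 := by
      have := congrArg Complex.im hθz
      simp only [Complex.ofReal_im, Complex.mul_im, Complex.sub_im, Complex.sub_re,
        Complex.conj_re, Complex.conj_im] at this
      simp only [Complex.add_im, Complex.mul_im, Complex.conj_re, Complex.conj_im]
      linarith
    rw [hq, Complex.add_im, ← Complex.ofReal_mul, Complex.im_ofReal_mul, hcross,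
      ← Complex.ofReal_pow, Complex.ofReal_im]
    simp
  have hcont : Continuous fun t => (⟪p t, N (p t)⟫_ℂ).re - b * ‖p t‖ ^ 2 := by
    simp only [hq]
    fun_prop
  obtain ⟨t, ht, htb⟩ : (0 : ℝ) ∈ (fun t => (⟪p t, N (p t)⟫_ℂ).re - b * ‖p t‖ ^ 2) ''
      Set.Icc 0 1 := by
    refine intermediate_value_Icc zero_le_one hcont.continuousOn ⟨?_, ?_⟩
    · simp only [hq]
      simp [p, norm_smul, hθ, hu, hb]
    · simp only [hq]
      simp [p, hw]
      linarith
  have hpt : p t ≠ 0 := by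
    intro h0
    have h1 : ((1 - t : ℝ) : ℂ) • θ • u = -((t : ℂ) • w) := eq_neg_of_add_eq_zero_left h0
    have h2 := congrArg norm h1
    rw [norm_neg, norm_smul, norm_smul, norm_smul, hθ, hu, hw, Complex.norm_real,
      Complex.norm_real, Real.norm_of_nonneg (by linarith [ht.2]),
      Real.norm_of_nonneg ht.1] at h2
    have h3 : t = 1 / 2 := by linarith
    have h4 : w = -(θ • u) := by
      have h5 : ((1 / 2 : ℝ) : ℂ) • (θ • u + w) = 0 := by
        rw [smul_add, ← h0, h3]
        simp only [p]
        congr 3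
        norm_num
      exact eq_neg_of_add_eq_zero_right ((smul_eq_zero.1 h5).resolve_left (by norm_num))
    rw [h4, map_neg, inner_neg_neg, map_smul, inner_smul_left, inner_smul_right, hNu] at hNw
    simp at hNw
  have hnorm : ((‖p t‖ : ℝ) : ℂ) ≠ 0 := by exact_mod_cast norm_ne_zero_iff.2 hpt
  have hNt : ⟪p t, N (p t)⟫_ℂ = b * (‖p t‖ : ℂ) ^ 2 := by
    apply Complex.ext
    · rw [← Complex.ofReal_pow, ← Complex.ofReal_mul, Complex.ofReal_re]
      simpa [sub_eq_zero] using htb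
    · rw [him, ← Complex.ofReal_pow, ← Complex.ofReal_mul, Complex.ofReal_im]
  have hpp : ⟪p t, p t⟫_ℂ = (‖p t‖ : ℂ) ^ 2 := inner_self_eq_norm_sq_to_K (p t)
  have hMt : ⟪p t, M (p t)⟫_ℂ = (x + (y - x) * b) * (‖p t‖ : ℂ) ^ 2 := by
    rw [hN, hpp] at hNt
    field_simp at hNt
    linear_combination hNt
  refine ⟨((‖p t‖ : ℂ)⁻¹) • p t, V.smul_mem _ (V.add_mem (V.smul_mem _ (V.smul_mem _ huV))
    (V.smul_mem _ hwV)), ?_, ?_⟩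
  · rw [norm_smul, norm_inv, Complex.norm_real, norm_norm,
      inv_mul_cancel₀ (norm_ne_zero_iff.2 hpt)]
  · have hab' : (a : ℂ) = 1 - b := by rw [← Complex.ofReal_one, ← hab]; push_cast; ring
    rw [map_smul, inner_smul_left, inner_smul_right, hMt, map_inv₀, Complex.conj_ofReal,
      Complex.real_smul, Complex.real_smul, hab']
    field_simp
    ring

/-- The vectors on which an operator attains its norm form a subspace. -/
def normAttainingSubmodule (B : E →L[ℂ] E) : Submodule ℂ E where
  carrier := {v | ‖B v‖ = ‖B‖ * ‖v‖}
  zero_mem' := by simp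
  add_mem' := by
    intro u w hu hw
    simp only [Set.mem_ofPred_eq] at hu hw ⊢
    have h₁ := parallelogram_law_with_norm ℂ (B u) (B w)
    have h₂ := parallelogram_law_with_norm ℂ u w
    rw [← map_add, ← map_sub, hu, hw] at h₁
    have hadd := B.le_opNorm (u + w)
    have hsub := mul_self_le_mul_self (norm_nonneg _) (B.le_opNorm (u - w))
    refine le_antisymm hadd (le_of_sq_le_sq ?_ (norm_nonneg _))
    linear_combination hsub - h₁ + ‖B‖ ^ 2 * h₂
  smul_mem' := by
    intro c v hv
    simp only [Set.mem_ofPred_eq] at hv ⊢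
    rw [map_smul, norm_smul, norm_smul, hv]
    ring

theorem mem_normAttainingSubmodule {B : E →L[ℂ] E} {v : E} :
    v ∈ normAttainingSubmodule B ↔ ‖B v‖ = ‖B‖ * ‖v‖ := Iff.rfl

variable [FiniteDimensional ℂ E] [Nontrivial E]

theorem exists_norm_apply_eq_opNorm (B : E →L[ℂ] E) : ∃ v, ‖v‖ = 1 ∧ ‖B v‖ = ‖B‖ := by
  have := FiniteDimensional.proper ℂ E
  have hne : (Metric.sphere (0 : E) 1).Nonempty := by
    obtain ⟨v, hv⟩ := exists_norm_eq E zero_le_one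
    exact ⟨v, by simpa using hv⟩
  obtain ⟨v, hv, hmax⟩ := (isCompact_sphere (0 : E) 1).exists_isMaxOn hne
    (f := fun v => ‖B v‖) (by fun_prop)
  have hv1 : ‖v‖ = 1 := by simpa using hv
  refine ⟨v, hv1, le_antisymm (by simpa [hv1] using B.le_opNorm v) ?_⟩
  rw [← B.sSup_sphere_eq_norm]
  refine csSup_le (hne.image _) ?_
  rintro _ ⟨w, hw, rfl⟩
  exact hmax hw

/-- If the norm of `B` does not decrease in the direction `-A`, then some norm-attaining vector
witnesses this to first order. -/
theorem exists_re_inner_nonpos_of_norm_le (A B : E →L[ℂ] E)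
    (h : ∀ ε : ℝ, ‖B‖ ≤ ‖B - (ε : ℂ) • A‖) :
    ∃ v, ‖v‖ = 1 ∧ ‖B v‖ = ‖B‖ ∧ (⟪B v, A v⟫_ℂ).re ≤ 0 := by
  have := FiniteDimensional.proper ℂ E
  let ε : ℕ → ℝ := fun k => 1 / ((k : ℝ) + 1)
  have hεpos : ∀ k, 0 < ε k := fun k => Nat.one_div_pos_of_nat
  have hεlim : Tendsto ε atTop (𝓝 0) := tendsto_one_div_add_atTop_nhds_zero_nat
  choose u hu1 hu using fun k => exists_norm_apply_eq_opNorm (B - (ε k : ℂ) • A)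
  obtain ⟨v, hv, φ, hφ, hlim⟩ := (isCompact_sphere (0 : E) 1).tendsto_subseq
    (x := u) fun k => by simpa using hu1 k
  have hv1 : ‖v‖ = 1 := by simpa using hv
  have hεφ : Tendsto (fun k => ε (φ k)) atTop (𝓝 0) := hεlim.comp hφ.tendsto_atTop
  have hlower : ∀ k, ‖B‖ ≤ ‖B (u k) - (ε k : ℂ) • A (u k)‖ := fun k =>
    (h (ε k)).trans (hu k).ge
  have hre : ∀ k, (⟪B (u k), A (u k)⟫_ℂ).re ≤ ε k * ‖A‖ ^ 2 := by
    intro k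
    have hsq := pow_le_pow_left₀ (norm_nonneg _) (hlower k) 2
    rw [norm_sub_sq (𝕜 := ℂ), inner_smul_right, norm_smul, Complex.norm_real,
      Real.norm_of_nonneg (hεpos k).le] at hsq
    have hre_mul : RCLike.re ((ε k : ℂ) * ⟪B (u k), A (u k)⟫_ℂ) =
        ε k * (⟪B (u k), A (u k)⟫_ℂ).re := Complex.re_ofReal_mul _ _
    rw [hre_mul] at hsq
    have hB := pow_le_pow_left₀ (norm_nonneg _) (B.le_opNorm (u k)) 2
    have hA := pow_le_pow_left₀ (norm_nonneg _) (A.le_opNorm (u k)) 2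
    rw [hu1, mul_one] at hA hB
    have hA' := mul_le_mul_of_nonneg_left hA (sq_nonneg (ε k))
    have hmul : ε k * (2 * (⟪B (u k), A (u k)⟫_ℂ).re) ≤ ε k * (ε k * ‖A‖ ^ 2) := by
      linarith
    have := le_of_mul_le_mul_left hmul (hεpos k)
    have := mul_nonneg (hεpos k).le (sq_nonneg ‖A‖)
    linarith
  refine ⟨v, hv1, le_antisymm (by simpa [hv1] using B.le_opNorm v) ?_, ?_⟩
  · have hl : Tendsto (fun k => ‖B (u (φ k)) - (ε (φ k) : ℂ) • A (u (φ k))‖) atTop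
        (𝓝 ‖B v - ((0 : ℝ) : ℂ) • A v‖) :=
      ((((B.continuous.tendsto v).comp hlim).sub
        (((Complex.continuous_ofReal.tendsto 0).comp hεφ).smul
          ((A.continuous.tendsto v).comp hlim)))).norm
    simpa using ge_of_tendsto' hl fun k => hlower (φ k)
  · have hl : Tendsto (fun k => (⟪B (u (φ k)), A (u (φ k))⟫_ℂ).re) atTop
        (𝓝 (⟪B v, A v⟫_ℂ).re) :=
      (Complex.continuous_re.tendsto _).comp
        (((B.continuous.tendsto v).comp hlim).inner ((A.continuous.tendsto v).comp hlim))
    have hr : Tendsto (fun k => ε (φ k) * ‖A‖ ^ 2) atTop (𝓝 0) := by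
      simpa using hεφ.mul_const (‖A‖ ^ 2)
    exact le_of_tendsto_of_tendsto' hl hr fun k => hre (φ k)

/-- **Bhatia–Šemrl theorem**: if `B` is Birkhoff orthogonal to `A`, then `B v ⟂ A v` for some unit
vector `v` at which `B` attains its norm. -/
theorem exists_inner_eq_zero_of_birkhoff_orthogonal (A B : E →L[ℂ] E)
    (h : ∀ c : ℂ, ‖B‖ ≤ ‖B - c • A‖) :
    ∃ v, ‖v‖ = 1 ∧ ‖B v‖ = ‖B‖ ∧ ⟪B v, A v⟫_ℂ = 0 := by
  have := FiniteDimensional.proper ℂ E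
  have := FiniteDimensional.complete ℂ E
  let M : E →L[ℂ] E := ContinuousLinearMap.adjoint B ∘L A
  have hM : ∀ v, ⟪v, M v⟫_ℂ = ⟪B v, A v⟫_ℂ := fun v =>
    ContinuousLinearMap.adjoint_inner_right B v (A v)
  let V := normAttainingSubmodule B
  let W : Set ℂ := {z | ∃ v ∈ V, ‖v‖ = 1 ∧ ⟪v, M v⟫_ℂ = z}
  have hWconv : Convex ℝ W := convex_numericalRange V (M : E →ₗ[ℂ] E)
  have hWcompact : IsCompact W := by
    have hW : W = (fun v => ⟪v, M v⟫_ℂ) '' (Metric.sphere 0 1 ∩ V) := by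
      ext z
      simp only [W, Set.mem_ofPred_eq, Set.mem_image, Set.mem_inter_iff, mem_sphere_zero_iff_norm,
        SetLike.mem_coe]
      constructor
      · rintro ⟨v, h₁, h₂, h₃⟩
        exact ⟨v, ⟨h₂, h₁⟩, h₃⟩
      · rintro ⟨v, ⟨h₂, h₁⟩, h₃⟩
        exact ⟨v, h₁, h₂, h₃⟩
    rw [hW]
    exact ((isCompact_sphere _ _).inter_right V.closed_of_finiteDimensional).image (by fun_prop)
  have hwit : ∀ c : ℂ, ∃ z ∈ W, (c * z).re ≤ 0 := by
    intro c
    obtain ⟨v, hv, hBv, hre⟩ := exists_re_inner_nonpos_of_norm_le (c • A) B fun ε => by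
      rw [smul_smul]; exact h _
    refine ⟨_, ⟨v, mem_normAttainingSubmodule.2 (by rw [hBv, hv, mul_one]), hv, rfl⟩, ?_⟩
    rwa [hM, ← inner_smul_right]
  have hWne : W.Nonempty := (hwit 0).imp fun _ => And.left
  obtain ⟨z, hz, hmin⟩ := exists_norm_eq_iInf_of_complete_convex hWne hWcompact.isComplete hWconv 0
  have hz0 : z = 0 := by
    obtain ⟨w, hw, hre⟩ := hwit ((starRingEnd ℂ) z)
    have hinner := (norm_eq_iInf_iff_real_inner_le_zero hWconv hz).1 hmin w hw
    rw [Complex.inner] at hinner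
    have hsq : Complex.normSq z ≤ 0 := by
      simp only [Complex.normSq_apply, Complex.mul_re, Complex.conj_re, Complex.conj_im,
        Complex.sub_re, Complex.sub_im, Complex.zero_re, Complex.zero_im] at hinner hre ⊢
      linarith
    exact Complex.normSq_eq_zero.1 (le_antisymm hsq (Complex.normSq_nonneg z))
  obtain ⟨v, hv, hv1, hvz⟩ := hz
  refine ⟨v, hv1, ?_, by rw [← hM, hvz, hz0]⟩
  rw [mem_normAttainingSubmodule.1 hv, hv1, mul_one]

/-- The pair consisting of a minimiser of `‖1 - α T‖` and a suitable unit vector is a saddle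
point. -/
theorem exists_saddle_point (T : E →L[ℂ] E) :
    ∃ (α₀ : ℂ) (v : E), ‖v‖ = 1 ∧ ∀ α : ℂ, ‖1 - α₀ • T‖ ≤ ‖v - α • T v‖ := by
  have : ProperSpace (E →L[ℂ] E) := FiniteDimensional.proper ℂ _
  obtain ⟨y, hy, hdist⟩ := (ℂ ∙ T).closed_of_finiteDimensional.exists_infDist_eq_dist
    (ℂ ∙ T).nonempty 1
  obtain ⟨α₀, rfl⟩ := Submodule.mem_span_singleton.1 hy
  have hmin : ∀ α : ℂ, ‖1 - α₀ • T‖ ≤ ‖1 - α • T‖ := by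
    intro α
    rw [← dist_eq_norm, ← dist_eq_norm, ← hdist]
    exact Metric.infDist_le_dist_of_mem
      (Submodule.smul_mem _ α (Submodule.mem_span_singleton_self T))
  obtain ⟨v, hv, hBv, horth⟩ := exists_inner_eq_zero_of_birkhoff_orthogonal T (1 - α₀ • T)
    fun c => by
      rw [sub_sub, ← add_smul]
      exact hmin _
  refine ⟨α₀, v, hv, fun α => ?_⟩
  have hsplit : v - α • T v = (1 - α₀ • T) v - (α - α₀) • T v := by
    simp [sub_smul]
  refine le_of_sq_le_sq ?_ (norm_nonneg _)
  rw [hsplit, norm_sub_sq (𝕜 := ℂ) ((1 - α₀ • T) v), inner_smul_right, horth, hBv]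
  simp only [mul_zero, map_zero, sub_zero]
  exact le_add_of_nonneg_right (sq_nonneg _)

end BirkhoffOrthogonality

theorem ideal_eq_worst_case_step_one {n : ℕ} (A : Matrix (Fin n) (Fin n) ℂ) :
    -- inf_α sup_{‖v‖=1} ‖v − αAv‖ = sup_{‖v‖=1} inf_α ‖v − αAv‖
    sInf {x | ∃ α : ℂ, x = sSup {y | ∃ v : EuclideanSpace ℂ (Fin n), ‖v‖ = 1 ∧
        y = ‖v - α • Matrix.toEuclideanLin A v‖}}
      = sSup {x | ∃ v : EuclideanSpace ℂ (Fin n), ‖v‖ = 1 ∧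
        x = sInf {y | ∃ α : ℂ, y = ‖v - α • Matrix.toEuclideanLin A v‖}} ∧
    -- equivalently, inf_α ‖I − αA‖ = sup_{‖v‖=1} inf_α ‖v − αAv‖
    sInf {x | ∃ α : ℂ, x = opNorm (1 - α • A)}
      = sSup {x | ∃ v : EuclideanSpace ℂ (Fin n), ‖v‖ = 1 ∧
        x = sInf {y | ∃ α : ℂ, y = ‖v - α • Matrix.toEuclideanLin A v‖}} := by
  obtain hn | hn := Nat.eq_zero_or_pos n
  · subst hn
    have hno : ∀ v : EuclideanSpace ℂ (Fin 0), ‖v‖ ≠ 1 := fun v => by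
      simp [Subsingleton.elim v 0]
    have hop : ∀ α : ℂ, opNorm (1 - α • A) = 0 := fun α => by
      simp [opNorm, Subsingleton.elim (1 - α • A) 0]
    simp [hno, hop]
  have : NeZero n := ⟨hn.ne'⟩
  set T : EuclideanSpace ℂ (Fin n) →L[ℂ] EuclideanSpace ℂ (Fin n) :=
    Matrix.toEuclideanCLM (𝕜 := ℂ) A
  have hTA : ∀ v, Matrix.toEuclideanLin A v = T v := fun v => rfl
  have hop : ∀ α : ℂ, opNorm (1 - α • A) = ‖1 - α • T‖ := fun α => by
    rw [opNorm, map_sub, map_one, map_smul]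
  have hsup : ∀ α : ℂ, sSup {y | ∃ v : EuclideanSpace ℂ (Fin n), ‖v‖ = 1 ∧
      y = ‖v - α • T v‖} = ‖1 - α • T‖ := by
    intro α
    rw [← (1 - α • T).sSup_sphere_eq_norm]
    congr 1
    ext y
    simp [eq_comm]
  simp only [hTA, hop, hsup, and_self]
  obtain ⟨α₀, v, hv, hsaddle⟩ := exists_saddle_point T
  have hle : ∀ (α : ℂ) (w : EuclideanSpace ℂ (Fin n)), ‖w‖ = 1 →
      ‖w - α • T w‖ ≤ ‖1 - α • T‖ := fun α w hw => by
    simpa [hw] using (1 - α • T).le_opNorm w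
  have hinf : IsLeast {x | ∃ α : ℂ, x = ‖1 - α • T‖} ‖1 - α₀ • T‖ := by
    refine ⟨⟨α₀, rfl⟩, ?_⟩
    rintro _ ⟨α, rfl⟩
    exact (hsaddle α).trans (hle α v hv)
  have hinf_v : IsLeast {y | ∃ α : ℂ, y = ‖v - α • T v‖} ‖1 - α₀ • T‖ := by
    refine ⟨⟨α₀, le_antisymm (hsaddle α₀) (hle α₀ v hv)⟩, ?_⟩
    rintro _ ⟨α, rfl⟩
    exact hsaddle α
  have hsup_inf : IsGreatest {x | ∃ v : EuclideanSpace ℂ (Fin n), ‖v‖ = 1 ∧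
      x = sInf {y | ∃ α : ℂ, y = ‖v - α • T v‖}} ‖1 - α₀ • T‖ := by
    refine ⟨⟨v, hv, hinf_v.csInf_eq.symm⟩, ?_⟩
    rintro _ ⟨w, hw, rfl⟩
    have hbdd : BddBelow {y | ∃ α : ℂ, y = ‖w - α • T w‖} := by
      refine ⟨0, ?_⟩
      rintro _ ⟨α, rfl⟩
      exact norm_nonneg _
    exact (csInf_le hbdd ⟨α₀, rfl⟩).trans (hle α₀ w hw)
  rw [hinf.csInf_eq, hsup_inf.csSup_eq]
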